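/- arXiv:2306.03698 — 3 statements merged into one kernel-verified Lean document; each statement's English description precedes it below -/
import Mathlib

section
/- Let (S,d) be a finite metric space with S = {x₁,…,x_n}, let μ and ν be (nonnegative, finite Borel) measures on S with ‖μ‖ ≥ ‖ν‖, and let ε > 0. Define ρ(ε) := max_{A ⊆ S} (μ(A) − ν(A^{ε]})), where A^{ε]} := {y ∈ S : d(x,y) ≤ ε for some x ∈ A}. Then ρ(ε) = ‖μ‖ − max Σ_{i,j=1}^{n} 1[d(x_i,x_j) ≤ ε]·x_{ij}, where the maximum is taken over all real variables x_{ij} ≥ 0 satisfying Σ_{i=1}^{n} x_{ij} = ν({x_j}) for every j ∈ [n] and Σ_{j=1}^{n} x_{ij} ≤ μ({x_i}) for every i ∈ [n]. -/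
open MeasureTheory Set

noncomputable section

/-- The closed `ε`-thickening `A^{ε]}` of a set in a metric space. -/
def closedThicken {S : Type} [MetricSpace S] (ε : ℝ) (A : Set S) : Set S :=
  {y | ∃ x ∈ A, dist x y ≤ ε}

/-!
A transport plan `x` only gains from the entries on pairs at distance at most `ε`, which form a
fractional matching of the relation `dist i j ≤ ε` with capacities `μ {i}` and `ν {j}`; conversely,
as `‖ν‖ ≤ ‖μ‖`, every fractional matching lies below a transport plan. On the other side,
`μ Aᶜ + ν (A^{ε]})` is the weight of the vertex cover `(Aᶜ, A^{ε]})`. The theorem is therefore the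
weighted König duality between fractional matchings and vertex covers.

For the duality, choose the matching `y` whose vector of row sums is the point nearest to `a` in
the convex compact set of all row-sum vectors. The variational inequality for the projection says
that `y` maximizes `z ↦ ∑ i, (a i - ∑ j, y i j) * ∑ j, z i j` among all matchings, so no mass can
be added to an unsaturated row, nor moved into it from a saturated one. Hence the saturated rows
and the neighbours of the unsaturated ones form a vertex cover of the same weight as `y`.
-/

lemma exists_mem_forall_sum_sub_mul_le {ι : Type*} [Fintype ι] {K : Set (ι → ℝ)}
    (hne : K.Nonempty) (hcompact : IsCompact K) (hconvex : Convex ℝ K) (a : ι → ℝ) :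
    ∃ r ∈ K, ∀ s ∈ K, ∑ i, (a i - r i) * s i ≤ ∑ i, (a i - r i) * r i := by
  let e : EuclideanSpace ℝ ι ≃L[ℝ] ι → ℝ := EuclideanSpace.equiv ι ℝ
  have hconvex' : Convex ℝ (e ⁻¹' K) := hconvex.linear_preimage e.toLinearMap
  have hcompact' : IsCompact (e ⁻¹' K) := e.toHomeomorph.isCompact_preimage.2 hcompact
  obtain ⟨r, hr, hnearest⟩ := exists_norm_eq_iInf_of_complete_convex
    (hne.preimage e.surjective) hcompact'.isComplete hconvex' (e.symm a)
  refine ⟨e r, hr, fun s hs => ?_⟩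
  have hinner := (norm_eq_iInf_iff_real_inner_le_zero hconvex' hr).1 hnearest (e.symm s)
    (by simpa using hs)
  rw [← sub_nonpos, ← Finset.sum_sub_distrib]
  simpa [e, PiLp.inner_apply, mul_sub, mul_comm] using hinner

section Single

variable {ι κ : Type*} [DecidableEq ι] [DecidableEq κ] {M : Type*} [AddCommMonoid M]

lemma row_sum_add_single [Fintype κ] (y : ι → κ → M) (i p : ι) (j : κ) (δ : M) :
    ∑ q, (y + (Pi.single i (Pi.single j δ) : ι → κ → M)) p q =
      ∑ q, y p q + (Pi.single i δ : ι → M) p := by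
  obtain rfl | hp := eq_or_ne p i <;> simp [Finset.sum_add_distrib, *]

lemma col_sum_add_single [Fintype ι] (y : ι → κ → M) (i : ι) (j q : κ) (δ : M) :
    ∑ p, (y + (Pi.single i (Pi.single j δ) : ι → κ → M)) p q =
      ∑ p, y p q + (Pi.single j δ : κ → M) q := by
  simp [Finset.sum_add_distrib, ← Finset.sum_apply]

lemma sum_mul_row_sum_add_single [Fintype ι] [Fintype κ] {R : Type*}
    [NonUnitalNonAssocSemiring R] (c : ι → R) (y : ι → κ → R) (i : ι) (j : κ) (δ : R) :
    ∑ p, c p * ∑ q, (y + (Pi.single i (Pi.single j δ) : ι → κ → R)) p q =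
      ∑ p, c p * ∑ q, y p q + c i * δ := by
  simp only [row_sum_add_single, mul_add, Finset.sum_add_distrib]
  simp [Pi.single_apply]

end Single

section FractionalMatching

variable {ι κ : Type*} [Fintype ι] [Fintype κ]

/-- A fractional matching of the bipartite graph with edge relation `E` between `ι` and `κ`, with
vertex capacities `a` on `ι` and `b` on `κ`: a nonnegative matrix supported on the edges. -/
structure IsFractionalMatching (E : ι → κ → Prop) (a : ι → ℝ) (b : κ → ℝ) (y : ι → κ → ℝ) :
    Prop where
  nonneg : ∀ i j, 0 ≤ y i j
  eq_zero : ∀ i j, ¬ E i j → y i j = 0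
  row_sum_le : ∀ i, ∑ j, y i j ≤ a i
  col_sum_le : ∀ j, ∑ i, y i j ≤ b j

variable {E : ι → κ → Prop} {a : ι → ℝ} {b : κ → ℝ} {y z : ι → κ → ℝ}

lemma isFractionalMatching_zero (ha : 0 ≤ a) (hb : 0 ≤ b) : IsFractionalMatching E a b 0 where
  nonneg _ _ := le_rfl
  eq_zero _ _ _ := rfl
  row_sum_le i := by simpa using ha i
  col_sum_le j := by simpa using hb j

lemma isFractionalMatching_ite [DecidableRel E] {x : ι → κ → ℝ} (hx : ∀ i j, 0 ≤ x i j)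
    (hrow : ∀ i, ∑ j, x i j ≤ a i) (hcol : ∀ j, ∑ i, x i j ≤ b j) :
    IsFractionalMatching E a b fun i j => if E i j then x i j else 0 := by
  have hle : ∀ i j, (if E i j then x i j else 0) ≤ x i j := fun i j => by
    split_ifs <;> simp [hx]
  exact
    { nonneg := fun i j => ite_nonneg (hx i j) le_rfl
      eq_zero := fun _ _ hE => if_neg hE
      row_sum_le := fun i => (Finset.sum_le_sum fun j _ => hle i j).trans (hrow i)
      col_sum_le := fun j => (Finset.sum_le_sum fun i _ => hle i j).trans (hcol j) }

lemma convex_setOf_isFractionalMatching : Convex ℝ {y | IsFractionalMatching E a b y} := by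
  intro y hy z hz s t hs ht hst
  have hrow : ∀ i, ∑ j, (s • y + t • z) i j = s * ∑ j, y i j + t * ∑ j, z i j := fun i => by
    simp [Finset.sum_add_distrib, Finset.mul_sum]
  have hcol : ∀ j, ∑ i, (s • y + t • z) i j = s * ∑ i, y i j + t * ∑ i, z i j := fun j => by
    simp [Finset.sum_add_distrib, Finset.mul_sum]
  exact
    { nonneg := fun i j =>
        add_nonneg (mul_nonneg hs (hy.nonneg i j)) (mul_nonneg ht (hz.nonneg i j))
      eq_zero := fun i j hE => by simp [hy.eq_zero i j hE, hz.eq_zero i j hE]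
      row_sum_le := fun i => (hrow i).trans_le <|
        convex_Iic (a i) (hy.row_sum_le i) (hz.row_sum_le i) hs ht hst
      col_sum_le := fun j => (hcol j).trans_le <|
        convex_Iic (b j) (hy.col_sum_le j) (hz.col_sum_le j) hs ht hst }

lemma isClosed_setOf_isFractionalMatching : IsClosed {y | IsFractionalMatching E a b y} := by
  have hset : {y | IsFractionalMatching E a b y} =
      {y | (∀ i j, 0 ≤ y i j) ∧ (∀ i j, ¬ E i j → y i j = 0) ∧
        (∀ i, ∑ j, y i j ≤ a i) ∧ ∀ j, ∑ i, y i j ≤ b j} :=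
    Set.ext fun _ => ⟨fun ⟨h₁, h₂, h₃, h₄⟩ => ⟨h₁, h₂, h₃, h₄⟩,
      fun ⟨h₁, h₂, h₃, h₄⟩ => ⟨h₁, h₂, h₃, h₄⟩⟩
  simp only [hset, ofPred_and, ofPred_forall]
  refine (isClosed_iInter fun i => isClosed_iInter fun j => ?_).inter <|
    (isClosed_iInter fun i => isClosed_iInter fun j => isClosed_iInter fun _ => ?_).inter <|
    (isClosed_iInter fun i => ?_).inter (isClosed_iInter fun j => ?_)
  · exact isClosed_le continuous_const (by fun_prop)
  · exact isClosed_eq (by fun_prop) continuous_const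
  all_goals exact isClosed_le (by fun_prop) continuous_const

lemma isCompact_setOf_isFractionalMatching : IsCompact {y | IsFractionalMatching E a b y} := by
  have hbox : {y | IsFractionalMatching E a b y} ⊆ Icc 0 fun i _ => a i := fun y hy =>
    ⟨hy.nonneg, fun i j => (Finset.single_le_sum (fun j _ => hy.nonneg i j)
      (Finset.mem_univ j)).trans (hy.row_sum_le i)⟩
  exact isCompact_Icc.of_isClosed_subset isClosed_setOf_isFractionalMatching hbox

/-- A fractional matching maximizing the linear functional that weights each row by its deficit
under the matching itself. This is the optimality condition for minimizing
`∑ i, (a i - ∑ j, y i j) ^ 2`. -/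
structure IsStationaryMatching (E : ι → κ → Prop) (a : ι → ℝ) (b : κ → ℝ) (y : ι → κ → ℝ) : Prop
    extends IsFractionalMatching E a b y where
  sum_deficit_mul_le : ∀ z, IsFractionalMatching E a b z →
    ∑ i, (a i - ∑ j, y i j) * ∑ j, z i j ≤ ∑ i, (a i - ∑ j, y i j) * ∑ j, y i j

variable (E) in
lemma exists_isStationaryMatching (ha : 0 ≤ a) (hb : 0 ≤ b) :
    ∃ y, IsStationaryMatching E a b y := by
  let rowSums : (ι → κ → ℝ) →ₗ[ℝ] ι → ℝ :=
    { toFun := fun y i => ∑ j, y i j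
      map_add' := fun _ _ => funext fun _ => Finset.sum_add_distrib
      map_smul' := fun _ _ => funext fun _ => (Finset.mul_sum ..).symm }
  have hcont : Continuous rowSums := rowSums.continuous_of_finiteDimensional
  obtain ⟨-, ⟨y, hy, rfl⟩, hmax⟩ := exists_mem_forall_sum_sub_mul_le
    (Nonempty.image rowSums ⟨0, isFractionalMatching_zero (E := E) ha hb⟩)
    (isCompact_setOf_isFractionalMatching.image hcont)
    (convex_setOf_isFractionalMatching.linear_image rowSums) a
  exact ⟨y, hy, fun z hz => hmax _ ⟨z, hz, rfl⟩⟩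

lemma IsFractionalMatching.mono (hy : IsFractionalMatching E a b y) (hz : 0 ≤ z) (hzy : z ≤ y) :
    IsFractionalMatching E a b z where
  nonneg := hz
  eq_zero i j hE := le_antisymm ((hzy i j).trans_eq (hy.eq_zero i j hE)) (hz i j)
  row_sum_le i := (Finset.sum_le_sum fun j _ => hzy i j).trans (hy.row_sum_le i)
  col_sum_le j := (Finset.sum_le_sum fun i _ => hzy i j).trans (hy.col_sum_le j)

namespace IsFractionalMatching

variable [DecidableEq ι] [DecidableEq κ] {i k : ι} {j : κ} {δ : ℝ}

lemma add_single (hy : IsFractionalMatching E a b y) (hE : E i j) (hδ : 0 ≤ δ)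
    (hrow : ∑ q, y i q + δ ≤ a i) (hcol : ∑ p, y p j + δ ≤ b j) :
    IsFractionalMatching E a b (y + Pi.single i (Pi.single j δ)) where
  nonneg := add_nonneg (show 0 ≤ y from hy.nonneg) (Pi.single_nonneg.2 (Pi.single_nonneg.2 hδ))
  eq_zero p q hpq := by
    have hy0 := hy.eq_zero p q hpq
    by_cases hp : p = i <;> by_cases hq : q = j <;> simp_all
  row_sum_le p := by
    rw [row_sum_add_single]
    obtain rfl | hp := eq_or_ne p i
    · simpa using hrow
    · simpa [hp] using hy.row_sum_le p
  col_sum_le q := by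
    rw [col_sum_add_single]
    obtain rfl | hq := eq_or_ne q j
    · simpa using hcol
    · simpa [hq] using hy.col_sum_le q

lemma sub_single (hy : IsFractionalMatching E a b y) (hδ : 0 ≤ δ) (hle : δ ≤ y k j) :
    IsFractionalMatching E a b (y + Pi.single k (Pi.single j (-δ))) := by
  refine hy.mono (fun p q => ?_) (add_le_of_nonpos_right ?_)
  · have hy0 := hy.nonneg p q
    by_cases hp : p = k <;> by_cases hq : q = j <;> simp_all
  · simpa using hδ

lemma transfer (hy : IsFractionalMatching E a b y) (hE : E i j) (hik : i ≠ k) (hδ : 0 ≤ δ)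
    (hrow : ∑ q, y i q + δ ≤ a i) (hle : δ ≤ y k j) :
    IsFractionalMatching E a b
      (y + Pi.single k (Pi.single j (-δ)) + Pi.single i (Pi.single j δ)) := by
  refine (hy.sub_single hδ hle).add_single hE hδ ?_ ?_
  · rw [row_sum_add_single]
    simpa [hik] using hrow
  · rw [col_sum_add_single]
    simpa using hy.col_sum_le j

end IsFractionalMatching

namespace IsStationaryMatching

variable {i k : ι} {j : κ}

lemma col_sum_eq (hy : IsStationaryMatching E a b y) (hi : ∑ q, y i q < a i) (hE : E i j) :
    ∑ p, y p j = b j := by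
  classical
  refine (hy.col_sum_le j).antisymm (not_lt.1 fun hj => ?_)
  obtain ⟨δ, hδ, hδi, hδj⟩ : ∃ δ > 0, ∑ q, y i q + δ ≤ a i ∧ ∑ p, y p j + δ ≤ b j :=
    ⟨min (a i - ∑ q, y i q) (b j - ∑ p, y p j), lt_min (sub_pos.2 hi) (sub_pos.2 hj),
      by linarith [min_le_left (a i - ∑ q, y i q) (b j - ∑ p, y p j)],
      by linarith [min_le_right (a i - ∑ q, y i q) (b j - ∑ p, y p j)]⟩
  have hmax := hy.sum_deficit_mul_le _ (hy.add_single hE hδ.le hδi hδj)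
  rw [sum_mul_row_sum_add_single] at hmax
  linarith [mul_pos (sub_pos.2 hi) hδ]

lemma eq_zero_of_row_sum_eq (hy : IsStationaryMatching E a b y) (hi : ∑ q, y i q < a i)
    (hE : E i j) (hk : ∑ q, y k q = a k) : y k j = 0 := by
  classical
  refine ((hy.nonneg k j).antisymm (not_lt.1 fun hpos => ?_)).symm
  have hik : i ≠ k := by
    rintro rfl
    exact hi.ne hk
  obtain ⟨δ, hδ, hδi, hδk⟩ : ∃ δ > 0, ∑ q, y i q + δ ≤ a i ∧ δ ≤ y k j :=
    ⟨min (a i - ∑ q, y i q) (y k j), lt_min (sub_pos.2 hi) hpos,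
      by linarith [min_le_left (a i - ∑ q, y i q) (y k j)], min_le_right _ _⟩
  have hmax := hy.sum_deficit_mul_le _ (hy.transfer hE hik hδ.le hδi hδk)
  rw [sum_mul_row_sum_add_single, sum_mul_row_sum_add_single, hk] at hmax
  linarith [mul_pos (sub_pos.2 hi) hδ]

end IsStationaryMatching

lemma sum_sum_ite_mem_add_ite_mem [DecidableEq ι] [DecidableEq κ] {M : Type*} [AddCommMonoid M]
    (C : Finset ι) (N : Finset κ) (y : ι → κ → M) :
    ∑ i, ∑ j, ((if i ∈ C then y i j else 0) + if j ∈ N then y i j else 0) =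
      ∑ i ∈ C, ∑ j, y i j + ∑ j ∈ N, ∑ i, y i j := by
  simp only [Finset.sum_add_distrib]
  congr 1
  · rw [Finset.sum_comm]
    simp [Finset.sum_comm (s := C)]
  · simp [Finset.sum_comm (t := N)]

lemma IsFractionalMatching.sum_le_vertexCover (hy : IsFractionalMatching E a b y)
    {C : Finset ι} {N : Finset κ} (hcover : ∀ i j, E i j → i ∈ C ∨ j ∈ N) :
    ∑ i, ∑ j, y i j ≤ ∑ i ∈ C, a i + ∑ j ∈ N, b j := by
  classical
  have hentry : ∀ i j, y i j ≤ (if i ∈ C then y i j else 0) + if j ∈ N then y i j else 0 := by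
    intro i j
    by_cases hE : E i j
    · have := hy.nonneg i j
      rcases hcover i j hE with hi | hj <;> split_ifs <;> simp_all
    · simp [hy.eq_zero i j hE]
  calc ∑ i, ∑ j, y i j
      ≤ ∑ i, ∑ j, ((if i ∈ C then y i j else 0) + if j ∈ N then y i j else 0) :=
        Finset.sum_le_sum fun i _ => Finset.sum_le_sum fun j _ => hentry i j
    _ = ∑ i ∈ C, ∑ j, y i j + ∑ j ∈ N, ∑ i, y i j :=
        sum_sum_ite_mem_add_ite_mem C N y
    _ ≤ ∑ i ∈ C, a i + ∑ j ∈ N, b j :=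
        add_le_add (Finset.sum_le_sum fun i _ => hy.row_sum_le i)
          (Finset.sum_le_sum fun j _ => hy.col_sum_le j)

lemma IsFractionalMatching.sum_eq_vertexCover (hy : IsFractionalMatching E a b y)
    {C : Finset ι} {N : Finset κ} (hcover : ∀ i j, E i j → i ∈ C ∨ j ∈ N)
    (hC : ∀ i ∈ C, ∑ j, y i j = a i) (hN : ∀ j ∈ N, ∑ i, y i j = b j)
    (hCN : ∀ i ∈ C, ∀ j ∈ N, y i j = 0) :
    ∑ i, ∑ j, y i j = ∑ i ∈ C, a i + ∑ j ∈ N, b j := by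
  classical
  have hentry : ∀ i j, y i j = (if i ∈ C then y i j else 0) + if j ∈ N then y i j else 0 := by
    intro i j
    by_cases hi : i ∈ C <;> by_cases hj : j ∈ N
    · simp [hCN i hi j hj]
    · simp [hi, hj]
    · simp [hi, hj]
    · simp [hy.eq_zero i j fun hE => (hcover i j hE).elim hi hj]
  calc ∑ i, ∑ j, y i j
      = ∑ i, ∑ j, ((if i ∈ C then y i j else 0) + if j ∈ N then y i j else 0) :=
        Finset.sum_congr rfl fun i _ => Finset.sum_congr rfl fun j _ => hentry i j
    _ = ∑ i ∈ C, ∑ j, y i j + ∑ j ∈ N, ∑ i, y i j := sum_sum_ite_mem_add_ite_mem C N y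
    _ = ∑ i ∈ C, a i + ∑ j ∈ N, b j :=
        congrArg₂ (· + ·) (Finset.sum_congr rfl hC) (Finset.sum_congr rfl hN)

variable (E) in
theorem exists_isFractionalMatching_sum_eq_vertexCover (ha : 0 ≤ a) (hb : 0 ≤ b) :
    ∃ (C : Finset ι) (N : Finset κ) (y : ι → κ → ℝ), (∀ i j, E i j → i ∈ C ∨ j ∈ N) ∧
      IsFractionalMatching E a b y ∧ ∑ i, ∑ j, y i j = ∑ i ∈ C, a i + ∑ j ∈ N, b j := by
  classical
  obtain ⟨y, hy⟩ := exists_isStationaryMatching E ha hb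
  let C : Finset ι := {i | ∑ j, y i j = a i}
  let N : Finset κ := {j | ∃ i, ∑ q, y i q < a i ∧ E i j}
  have hcover : ∀ i j, E i j → i ∈ C ∨ j ∈ N := fun i j hE =>
    (hy.row_sum_le i).eq_or_lt.imp (by simp [C]) fun hi => by simpa [N] using ⟨i, hi, hE⟩
  have hC : ∀ i ∈ C, ∑ j, y i j = a i := by simp [C]
  have hN : ∀ j ∈ N, ∑ i, y i j = b j := by
    simp only [N, Finset.mem_filter_univ]
    rintro j ⟨i, hi, hE⟩
    exact hy.col_sum_eq hi hE
  have hCN : ∀ i ∈ C, ∀ j ∈ N, y i j = 0 := by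
    simp only [C, N, Finset.mem_filter_univ]
    rintro k hk j ⟨i, hi, hE⟩
    exact hy.eq_zero_of_row_sum_eq hi hE hk
  exact ⟨C, N, y, hcover, hy.toIsFractionalMatching, hy.sum_eq_vertexCover hcover hC hN hCN⟩

lemma exists_nonneg_col_sum_eq_row_sum_le {u : ι → ℝ} {v : κ → ℝ} (hu : 0 ≤ u) (hv : 0 ≤ v)
    (huv : ∑ j, v j ≤ ∑ i, u i) :
    ∃ w : ι → κ → ℝ, (∀ i j, 0 ≤ w i j) ∧ (∀ j, ∑ i, w i j = v j) ∧ ∀ i, ∑ j, w i j ≤ u i := by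
  have hU : 0 ≤ ∑ i, u i := Finset.sum_nonneg fun i _ => hu i
  refine ⟨fun i j => u i * (v j / ∑ i, u i), fun i j => mul_nonneg (hu i) (div_nonneg (hv j) hU),
    fun j => ?_, fun i => ?_⟩
  · rw [← Finset.sum_mul]
    refine mul_div_cancel_of_imp' fun hU0 => ?_
    have hvj : v j ≤ ∑ j, v j := Finset.single_le_sum (fun j _ => hv j) (Finset.mem_univ j)
    exact (hvj.trans (huv.trans_eq hU0)).antisymm (hv j)
  · rw [← Finset.mul_sum, ← Finset.sum_div]
    exact mul_le_of_le_one_right (hu i) (div_le_one_of_le₀ huv hU)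

lemma IsFractionalMatching.exists_ge_col_sum_eq (hy : IsFractionalMatching E a b y)
    (hab : ∑ j, b j ≤ ∑ i, a i) :
    ∃ x : ι → κ → ℝ, (∀ i j, y i j ≤ x i j) ∧ (∀ j, ∑ i, x i j = b j) ∧
      ∀ i, ∑ j, x i j ≤ a i := by
  have hdeficit : ∑ j, (b j - ∑ i, y i j) ≤ ∑ i, (a i - ∑ j, y i j) := by
    rw [Finset.sum_sub_distrib, Finset.sum_sub_distrib, Finset.sum_comm (f := y)]
    exact sub_le_sub_right hab _
  obtain ⟨w, hw, hcol, hrow⟩ := exists_nonneg_col_sum_eq_row_sum_le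
    (fun i => sub_nonneg.2 (hy.row_sum_le i)) (fun j => sub_nonneg.2 (hy.col_sum_le j)) hdeficit
  refine ⟨y + w, fun i j => le_add_of_nonneg_right (hw i j), fun j => ?_, fun i => ?_⟩
  · simp [Finset.sum_add_distrib, hcol]
  · simpa [Finset.sum_add_distrib, le_sub_iff_add_le'] using hrow i

end FractionalMatching

section Measure

variable {ι κ : Type*} [Fintype ι] [Fintype κ] [MeasurableSpace ι] [MeasurableSingletonClass ι]
  [MeasurableSpace κ] [MeasurableSingletonClass κ] {E : ι → κ → Prop}
  {μ : Measure ι} {ν : Measure κ} [IsFiniteMeasure μ] [IsFiniteMeasure ν]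

lemma IsFractionalMatching.measureReal_sub_add_sum_le {y : ι → κ → ℝ}
    (hy : IsFractionalMatching E (fun i => μ.real {i}) (fun j => ν.real {j}) y) (A : Set ι) :
    μ.real A - ν.real {j | ∃ i ∈ A, E i j} + ∑ i, ∑ j, y i j ≤ μ.real univ := by
  classical
  have hcover : ∀ i j, E i j → i ∈ Aᶜ.toFinset ∨ j ∈ {j | ∃ i ∈ A, E i j}.toFinset := by
    intro i j hE
    by_cases hi : i ∈ A
    · exact .inr (mem_toFinset.2 ⟨i, hi, hE⟩)
    · exact .inl (mem_toFinset.2 hi)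
  have hle := hy.sum_le_vertexCover hcover
  simp only [sum_measureReal_singleton, coe_toFinset] at hle
  linarith [measureReal_add_measureReal_compl (μ := μ) A.toFinite.measurableSet]

variable (E μ ν) in
lemma exists_isFractionalMatching_measureReal_univ_le :
    ∃ (A : Set ι) (y : ι → κ → ℝ),
      IsFractionalMatching E (fun i => μ.real {i}) (fun j => ν.real {j}) y ∧
      μ.real univ ≤ μ.real A - ν.real {j | ∃ i ∈ A, E i j} + ∑ i, ∑ j, y i j := by
  obtain ⟨C, N, y, hcover, hy, hsum⟩ := exists_isFractionalMatching_sum_eq_vertexCover E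
    (a := fun i => μ.real {i}) (b := fun j => ν.real {j})
    (fun _ => measureReal_nonneg) (fun _ => measureReal_nonneg)
  have hneighbors : {j | ∃ i ∈ (C : Set ι)ᶜ, E i j} ⊆ (N : Set κ) := by
    rintro j ⟨i, hi, hE⟩
    exact (hcover i j hE).resolve_left hi
  refine ⟨(C : Set ι)ᶜ, y, hy, ?_⟩
  rw [hsum, sum_measureReal_singleton, sum_measureReal_singleton]
  linarith [measureReal_add_measureReal_compl (μ := μ) C.measurableSet,
    measureReal_mono (μ := ν) hneighbors]

end Measure

lemma csSup_eq_sub_csSup_of_forall_add_le {F G : Set ℝ} {c : ℝ}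
    (hweak : ∀ s ∈ F, ∀ t ∈ G, s + t ≤ c)
    (hstrong : ∃ s ∈ F, ∃ t ∈ G, c ≤ s + t) : sSup F = c - sSup G := by
  obtain ⟨s, hs, t, ht, hst⟩ := hstrong
  have hF : IsGreatest F s := ⟨hs, fun r hr => by linarith [hweak r hr t ht]⟩
  have hG : IsGreatest G t := ⟨ht, fun r hr => by linarith [hweak s hs r hr]⟩
  rw [hF.csSup_eq, hG.csSup_eq]
  linarith [hweak s hs t ht]

theorem rho_eq_lp_general {ι κ : Type*} [Fintype ι] [Fintype κ]
    [MeasurableSpace ι] [MeasurableSingletonClass ι]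
    [MeasurableSpace κ] [MeasurableSingletonClass κ]
    (E : ι → κ → Prop) [DecidableRel E]
    (μ : Measure ι) (ν : Measure κ) [IsFiniteMeasure μ] [IsFiniteMeasure ν]
    (hmass : ν Set.univ ≤ μ Set.univ) :
    sSup {r : ℝ | ∃ A : Set ι, r = (μ A).toReal - (ν {j | ∃ i ∈ A, E i j}).toReal} =
      (μ Set.univ).toReal -
        sSup {r : ℝ | ∃ x : ι → κ → ℝ,
          (∀ i j, 0 ≤ x i j) ∧
          (∀ j, ∑ i, x i j = (ν {j}).toReal) ∧
          (∀ i, ∑ j, x i j ≤ (μ {i}).toReal) ∧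
          r = ∑ i, ∑ j, if E i j then x i j else 0} := by
  apply csSup_eq_sub_csSup_of_forall_add_le
  · rintro _ ⟨A, rfl⟩ _ ⟨x, hx, hcol, hrow, rfl⟩
    exact (isFractionalMatching_ite hx hrow fun j => (hcol j).le).measureReal_sub_add_sum_le A
  · obtain ⟨A, y, hy, hAy⟩ := exists_isFractionalMatching_measureReal_univ_le E μ ν
    have hab : ∑ j, ν.real {j} ≤ ∑ i, μ.real {i} := by
      simp only [sum_measureReal_singleton, Finset.coe_univ]
      exact ENNReal.toReal_mono (measure_ne_top μ _) hmass
    obtain ⟨x, hyx, hcol, hrow⟩ := hy.exists_ge_col_sum_eq hab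
    have hle : ∑ i, ∑ j, y i j ≤ ∑ i, ∑ j, if E i j then x i j else 0 :=
      Finset.sum_le_sum fun i _ => Finset.sum_le_sum fun j _ => by
        split_ifs with hE
        exacts [hyx i j, (hy.eq_zero i j hE).le]
    exact ⟨_, ⟨A, rfl⟩, _,
      ⟨x, fun i j => (hy.nonneg i j).trans (hyx i j), hcol, hrow, rfl⟩,
      hAy.trans (add_le_add_right hle _)⟩

/-- Linear-programming expression of `ρ(ε)` on a finite metric space:
`max_{A ⊆ S} (μ(A) - ν(A^{ε]}))`, for measures with `‖μ‖ ≥ ‖ν‖`, equals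
`‖μ‖ - max Σ_{i,j} 1[d(x_i,x_j) ≤ ε]·x_{ij}`, the maximum over all nonnegative
`x_{ij}` with `Σ_i x_{ij} = ν({x_j})` and `Σ_j x_{ij} ≤ μ({x_i})`. -/
theorem rho_eq_lp {S : Type} [Fintype S] [MetricSpace S]
    [MeasurableSpace S] [MeasurableSingletonClass S]
    (μ ν : Measure S) [IsFiniteMeasure μ] [IsFiniteMeasure ν]
    (hmass : ν Set.univ ≤ μ Set.univ) (ε : ℝ) (hε : 0 < ε) :
    sSup {r : ℝ | ∃ A : Set S,
        r = (μ A).toReal - (ν (closedThicken ε A)).toReal} =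
      (μ Set.univ).toReal -
        sSup {r : ℝ | ∃ x : S → S → ℝ,
          (∀ i j, 0 ≤ x i j) ∧
          (∀ j, ∑ i, x i j = (ν {j}).toReal) ∧
          (∀ i, ∑ j, x i j ≤ (μ {i}).toReal) ∧
          r = ∑ i, ∑ j, if dist i j ≤ ε then x i j else 0} :=
  rho_eq_lp_general (fun i j => dist i j ≤ ε) μ ν hmass

end
end

section
/- Let W be a graphon and let φ = (φ_t)_{t=0}^L be an L-layer MPNN model. Then for every t ∈ {1,…,L} and λ-almost every x ∈ [0,1], the graphon MPNN feature equals the MPNN feature of the 1-WL color of x: h_x^{(t)} = h^{(t)}_{i_{W,t}(x)}. -/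
open MeasureTheory Set

noncomputable section

/-- Borel measures of total mass at most one on `X`. -/
abbrev SubProb (X : Type) [MeasurableSpace X] : Type :=
  {μ : Measure X // μ Set.univ ≤ 1}

/-- The weak topology on `SubProb X`: the coarsest topology making all maps
`μ ↦ ∫ f dμ` for bounded continuous `f` continuous. -/
def subProbWeakTop (X : Type) [MeasurableSpace X] [TopologicalSpace X] :
    TopologicalSpace (SubProb X) :=
  ⨅ f : BoundedContinuousFunction X ℝ,
    TopologicalSpace.induced (fun μ => ∫ x, f x ∂μ.val) inferInstance

/-- Iterated degree measure spaces with their (weak) topologies: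
`M 0` is a one-point space and `M (h+1)` is the space of Borel measures of total
mass at most one on `M h` with the weak topology. -/
def IDM : ℕ → Σ X : Type, TopologicalSpace X
  | 0 => ⟨Unit, inferInstance⟩
  | (h+1) =>
      let p := IDM h
      ⟨@SubProb p.1 (@borel p.1 p.2), @subProbWeakTop p.1 (@borel p.1 p.2) p.2⟩

/-- The space of iterated degree measures of depth `h`. -/
def M (h : ℕ) : Type := (IDM h).1

instance (h : ℕ) : TopologicalSpace (M h) := (IDM h).2
instance (h : ℕ) : MeasurableSpace (M h) := borel (M h)
instance (h : ℕ) : BorelSpace (M h) := ⟨rfl⟩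

def toSub {h : ℕ} (α : M (h+1)) : SubProb (M h) := α
def ofSub {h : ℕ} (μ : SubProb (M h)) : M (h+1) := μ
/-- The underlying measure of an iterated degree measure. -/
def toMeas {h : ℕ} (α : M (h+1)) : Measure (M h) := (toSub α).1

/-- An MPNN model: dimensions `d t`, an initial feature `φ₀ ∈ ℝ^{d 0}`, and
continuous update functions `φ t : ℝ^{d t} → ℝ^{d (t+1)}`. An `L`-layer model uses
the layers `φ 0, …, φ (L-1)`. -/
structure MPNNModel where
  d : ℕ → ℕ
  φ₀ : EuclideanSpace ℝ (Fin (d 0))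
  φ : (t : ℕ) → EuclideanSpace ℝ (Fin (d t)) → EuclideanSpace ℝ (Fin (d (t+1)))
  cont : ∀ t, Continuous (φ t)

/-- MPNN features on iterated degree measures: `h^{(0)}_α = φ₀` and
`h^{(t+1)}_α = φ_t (∫ h^{(t)}_β dα(β))`. -/
def idmFeat (m : MPNNModel) : (t : ℕ) → M t → EuclideanSpace ℝ (Fin (m.d t))
  | 0, _ => m.φ₀
  | (t+1), α => m.φ t (∫ β, idmFeat m t β ∂(toMeas α))

/-- A graphon: a symmetric measurable kernel `[0,1]² → [0,1]` (here defined on all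
of `ℝ²`, with `[0,1]` carrying the Lebesgue measure). -/
structure Graphon where
  W : ℝ → ℝ → ℝ
  symm : ∀ x y, W x y = W y x
  mem : ∀ x y, W x y ∈ Set.Icc (0:ℝ) 1
  meas : Measurable (Function.uncurry W)

/-- MPNN point features on a graphon kernel. -/
def graphonFeat (m : MPNNModel) (W : ℝ → ℝ → ℝ) :
    (t : ℕ) → ℝ → EuclideanSpace ℝ (Fin (m.d t))
  | 0, _ => m.φ₀
  | (t+1), x => m.φ t (∫ y in Set.Icc (0:ℝ) 1, W x y • graphonFeat m W t y)

/-- The graphon 1-WL maps `i_{W,h} : [0,1] → M h`: `i_{W,h+1}(x)` is the pushforward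
along `i_{W,h}` of the measure on `[0,1]` with density `W(x,·)`. -/
def wlMap (W : Graphon) : (h : ℕ) → ℝ → M h
  | 0, _ => ()
  | (h+1), x => ofSub ⟨Measure.map (wlMap W h)
      ((volume.restrict (Set.Icc (0:ℝ) 1)).withDensity fun y =>
        ENNReal.ofReal (W.W x y)), by
      by_cases hf : AEMeasurable (wlMap W h)
          ((volume.restrict (Set.Icc (0:ℝ) 1)).withDensity fun y =>
            ENNReal.ofReal (W.W x y))
      · rw [Measure.map_apply_of_aemeasurable hf MeasurableSet.univ, Set.preimage_univ,
          withDensity_apply _ MeasurableSet.univ, Measure.restrict_univ]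
        calc ∫⁻ y, ENNReal.ofReal (W.W x y) ∂(volume.restrict (Set.Icc (0:ℝ) 1))
            ≤ ∫⁻ _, 1 ∂(volume.restrict (Set.Icc (0:ℝ) 1)) :=
              lintegral_mono fun y => ENNReal.ofReal_le_one.mpr (W.mem x y).2
          _ ≤ 1 := by simp [Real.volume_Icc]
      · rw [Measure.map_of_not_aemeasurable hf]
        simp⟩

/-!
Unfolding one layer, `h^{(t+1)}` on iterated degree measures integrates `h^{(t)}` against the
pushforward along `i_{W,t}` of the measure with density `W(x,·)`, so the change of variables formula
turns one recursion into the other. What has to be checked is that both maps in the composition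
`h^{(t)} ∘ i_{W,t}` are Borel. The features `h^{(t)}` are bounded and continuous, by induction on
`t`. For `i_{W,t+1}`, measurability of the integrals `x ↦ ∫ k d i_{W,t+1}(x)` would suffice only
once `M_{t+1}` is known to be second countable. This is avoided as follows: each of these integrals
is a continuous linear functional of the row `W(x,·) ∈ L¹`, so `i_{W,t+1}` is continuous for the
topology induced by the row map; and the row map is Borel because `L¹` is separable and its
distances to fixed elements are measurable.
-/

section RowMap

open scoped Topology

variable {Ω α E : Type*} [MeasurableSpace Ω]

lemma measurable_of_forall_measurable_dist [PseudoMetricSpace E] [SecondCountableTopology E]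
    [MeasurableSpace E] [BorelSpace E] {f : Ω → E} (hf : ∀ c, Measurable fun x => dist (f x) c) :
    Measurable f := by
  have balls_basis : TopologicalSpace.IsTopologicalBasis
      {s : Set E | ∃ c r, s = Metric.ball c r} := by
    refine TopologicalSpace.isTopologicalBasis_of_isOpen_of_nhds ?_ fun c U hc hU => ?_
    · rintro _ ⟨c, r, rfl⟩
      exact Metric.isOpen_ball
    · obtain ⟨r, hr, hrU⟩ := Metric.isOpen_iff.1 hU c hc
      exact ⟨_, ⟨c, r, rfl⟩, Metric.mem_ball_self hr, hrU⟩
  rw [BorelSpace.measurable_eq (α := E), balls_basis.borel_eq_generateFrom]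
  refine measurable_generateFrom ?_
  rintro _ ⟨c, r, rfl⟩
  exact measurableSet_lt (hf c) measurable_const

lemma measurable_of_continuous_induced {Y : Type*} [TopologicalSpace E] [MeasurableSpace E]
    [OpensMeasurableSpace E] [TopologicalSpace Y] {r : Ω → E} (hr : Measurable r) {f : Ω → Y}
    (hf : Continuous[TopologicalSpace.induced r inferInstance, inferInstance] f) :
    Measurable[_, borel Y] f := by
  let _ : TopologicalSpace Ω := .induced r inferInstance
  refine measurable_generateFrom fun U hU => ?_
  obtain ⟨V, hV, hVU⟩ := isOpen_induced_iff.1 (hf.isOpen_preimage U hU)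
  exact hVU ▸ hr hV.measurableSet

variable [MeasurableSpace α] {μ : Measure α} [NormedAddCommGroup E]

lemma dist_toL1_eq_integral_norm_sub {f : α → E} (hf : Integrable f μ) (g : Lp E 1 μ) :
    dist hf.toL1 g = ∫ y, ‖f y - g y‖ ∂μ := by
  rw [dist_eq_norm, L1.norm_eq_integral_norm]
  refine integral_congr_ae ?_
  filter_upwards [Lp.coeFn_sub hf.toL1 g, hf.coeFn_toL1] with y hsub hrow
  rw [hsub, Pi.sub_apply, hrow]

lemma measurable_toL1 [SFinite μ] [IsSeparable μ] [TopologicalSpace.SeparableSpace E]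
    [MeasurableSpace (Lp E 1 μ)] [BorelSpace (Lp E 1 μ)] {w : Ω → α → E}
    (hw : StronglyMeasurable (Function.uncurry w)) (hw_int : ∀ x, Integrable (w x) μ) :
    Measurable fun x => (hw_int x).toL1 := by
  have : Fact ((1 : ENNReal) ≠ ⊤) := ⟨ENNReal.one_ne_top⟩
  refine measurable_of_forall_measurable_dist fun g => ?_
  simp_rw [dist_toL1_eq_integral_norm_sub]
  have hdiff : StronglyMeasurable (Function.uncurry fun x y => ‖w x y - g y‖) :=
    (hw.sub ((Lp.stronglyMeasurable g).comp_measurable measurable_snd)).norm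
  exact hdiff.integral_prod_right.measurable

end RowMap

section WeightedPushforward

variable {α E X : Type*} [MeasurableSpace α] {μ : Measure α} [NormedAddCommGroup E]
  [NormedSpace ℝ E]

lemma continuous_integral_smul_of_memLp_top [CompleteSpace E] {u : α → E} (hu : MemLp u ⊤ μ) :
    Continuous fun f : Lp ℝ 1 μ => ∫ y, f y • u y ∂μ := by
  have pairing_eq (f : Lp ℝ 1 μ) : ∫ y, f y • u y ∂μ =
      (ContinuousLinearMap.lsmul ℝ ℝ).lpPairing μ 1 ⊤ f hu.toLp := by
    rw [ContinuousLinearMap.lpPairing_eq_integral]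
    refine integral_congr_ae ?_
    filter_upwards [hu.coeFn_toLp] with y hy
    rw [hy, ContinuousLinearMap.lsmul_apply]
  simp_rw [pairing_eq]
  fun_prop

lemma integral_map_withDensity_ofReal [MeasurableSpace X] {g : α → X} (hg : AEMeasurable g μ)
    {w : α → ℝ} (hw : AEMeasurable w μ) (hw_nonneg : 0 ≤ᵐ[μ] w) {k : X → E}
    (hk : AEStronglyMeasurable k ((μ.withDensity fun y => ENNReal.ofReal (w y)).map g)) :
    ∫ b, k b ∂(μ.withDensity fun y => ENNReal.ofReal (w y)).map g = ∫ y, w y • k (g y) ∂μ := by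
  rw [integral_map (hg.mono_ac (withDensity_absolutelyContinuous _ _)) hk,
    integral_withDensity_eq_integral_toReal_smul₀ hw.ennreal_ofReal
      (ae_of_all _ fun _ => ENNReal.ofReal_lt_top)]
  refine integral_congr_ae ?_
  filter_upwards [hw_nonneg] with y hy
  rw [ENNReal.toReal_ofReal hy]

end WeightedPushforward

section WeakTopology

attribute [local instance] subProbWeakTop

variable {X : Type} [MeasurableSpace X]

instance (μ : SubProb X) : IsFiniteMeasure μ.1 :=
  ⟨μ.2.trans_lt ENNReal.one_lt_top⟩

lemma norm_integral_subProb_le {E : Type*} [NormedAddCommGroup E] [NormedSpace ℝ E] {f : X → E}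
    {C : ℝ} (hC : 0 ≤ C) (hf : ∀ x, ‖f x‖ ≤ C) (μ : SubProb X) : ‖∫ x, f x ∂μ.1‖ ≤ C :=
  calc ‖∫ x, f x ∂μ.1‖ ≤ C * μ.1.real univ := norm_integral_le_of_norm_le_const (ae_of_all _ hf)
    _ ≤ C := mul_le_of_le_one_right hC (ENNReal.toReal_mono ENNReal.one_ne_top μ.2)

variable [TopologicalSpace X]

lemma continuous_subProb_iff {Y : Type*} [TopologicalSpace Y] {κ : Y → SubProb X} :
    Continuous κ ↔ ∀ k : BoundedContinuousFunction X ℝ, Continuous fun y => ∫ b, k b ∂(κ y).1 :=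
  continuous_iInf_rng.trans (forall_congr' fun _ => continuous_induced_rng)

variable [OpensMeasurableSpace X]

lemma continuous_integral_subProb {E : Type*} [NormedAddCommGroup E] [NormedSpace ℝ E]
    [FiniteDimensional ℝ E] {u : X → E} (hu : Continuous u)
    (hu_bdd : Bornology.IsBounded (range u)) :
    Continuous fun μ : SubProb X => ∫ x, u x ∂μ.1 := by
  have : CompleteSpace E := FiniteDimensional.complete ℝ E
  obtain ⟨C, hC⟩ := hu_bdd.exists_norm_le
  rw [forall_mem_range] at hC
  have hu_int (μ : SubProb X) : Integrable u μ.1 :=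
    .of_bound hu.aestronglyMeasurable C (ae_of_all _ hC)
  let e := (Module.finBasis ℝ E).equivFunL
  rw [← e.toHomeomorph.comp_continuous_iff]
  refine continuous_pi fun i => ?_
  let coord : E →L[ℝ] ℝ :=
    (ContinuousLinearMap.proj (φ := fun _ => ℝ) i).comp e.toContinuousLinearMap
  let k : BoundedContinuousFunction X ℝ :=
    .ofNormedAddCommGroup (coord ∘ u) (coord.continuous.comp hu) (‖coord‖ * C)
      fun x => coord.le_opNorm_of_le (hC x)
  have coord_integral (μ : SubProb X) : coord (∫ x, u x ∂μ.1) = ∫ x, k x ∂μ.1 :=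
    (coord.integral_comp_comm (hu_int μ)).symm
  exact (continuous_subProb_iff.1 continuous_id k).congr fun μ => (coord_integral μ).symm

lemma measurable_subProb_of_eq_map_withDensity {Ω α : Type*} [MeasurableSpace Ω]
    [MeasurableSpace α] {μ : Measure α} [SFinite μ] [IsSeparable μ]
    {g : α → X} (hg : AEMeasurable g μ) {w : Ω → α → ℝ}
    (hw : StronglyMeasurable (Function.uncurry w)) (hw_nonneg : ∀ x, 0 ≤ᵐ[μ] w x)
    (hw_int : ∀ x, Integrable (w x) μ) {κ : Ω → SubProb X}
    (hκ : ∀ x, (κ x).1 = (μ.withDensity fun y => ENNReal.ofReal (w x y)).map g) :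
    Measurable[_, borel (SubProb X)] κ := by
  borelize ↥(Lp ℝ 1 μ)
  let row (x : Ω) : Lp ℝ 1 μ := (hw_int x).toL1
  have hrow : Measurable row := measurable_toL1 hw hw_int
  refine measurable_of_continuous_induced hrow ?_
  let _ : TopologicalSpace Ω := .induced row inferInstance
  refine continuous_subProb_iff.2 fun k => ?_
  have integral_eq (x : Ω) : ∫ b, k b ∂(κ x).1 = ∫ y, row x y • k (g y) ∂μ := by
    rw [hκ, integral_map_withDensity_ofReal hg (hw_int x).aemeasurable (hw_nonneg x)
      k.continuous.aestronglyMeasurable]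
    refine integral_congr_ae ?_
    filter_upwards [(hw_int x).coeFn_toL1] with y hy
    rw [hy]
  have hkg : MemLp (fun y => k (g y)) ⊤ μ :=
    memLp_top_of_bound (k.continuous.measurable.comp_aemeasurable hg).aestronglyMeasurable ‖k‖
      (ae_of_all _ fun y => k.norm_coe_le_norm (g y))
  simp_rw [integral_eq]
  exact (continuous_integral_smul_of_memLp_top hkg).comp continuous_induced_dom

end WeakTopology

section Features

lemma isBounded_range_idmFeat (m : MPNNModel) (t : ℕ) :
    Bornology.IsBounded (range (idmFeat m t)) := by
  induction t with
  | zero => exact Bornology.isBounded_singleton.subset (range_subset_iff.2 fun _ => rfl)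
  | succ t ih =>
    obtain ⟨C, hC_pos, hC⟩ := ih.exists_pos_norm_le
    rw [forall_mem_range] at hC
    refine ((isCompact_closedBall 0 C).image (m.cont t)).isBounded.subset
      (range_subset_iff.2 fun α => mem_image_of_mem _ ?_)
    exact mem_closedBall_zero_iff.2 (norm_integral_subProb_le hC_pos.le hC (toSub α))

lemma continuous_idmFeat (m : MPNNModel) (t : ℕ) : Continuous (idmFeat m t) := by
  induction t with
  | zero => exact continuous_const (y := m.φ₀)
  | succ t ih =>
    have integral_continuous : Continuous fun α : M (t + 1) => ∫ β, idmFeat m t β ∂toMeas α :=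
      continuous_integral_subProb (X := M t) ih (isBounded_range_idmFeat m t)
    exact (m.cont t).comp integral_continuous

lemma Graphon.measurable_row (W : Graphon) (x : ℝ) : Measurable (W.W x) :=
  W.meas.comp measurable_prodMk_left

lemma Graphon.integrable_row (W : Graphon) (μ : Measure ℝ) [IsFiniteMeasure μ] (x : ℝ) :
    Integrable (W.W x) μ :=
  .of_mem_Icc 0 1 (W.measurable_row x).aemeasurable (ae_of_all _ (W.mem x))

lemma measurable_wlMap (W : Graphon) (h : ℕ) : Measurable (wlMap W h) := by
  induction h with
  | zero => exact measurable_const (a := (() : M 0))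
  | succ h ih =>
    exact measurable_subProb_of_eq_map_withDensity ih.aemeasurable W.meas.stronglyMeasurable
      (fun x => ae_of_all _ fun y => (W.mem x y).1) (W.integrable_row _) fun _ => rfl

lemma integral_toMeas_wlMap_succ {E : Type*} [NormedAddCommGroup E] [NormedSpace ℝ E]
    (W : Graphon) (h : ℕ) (x : ℝ) {k : M h → E} (hk : StronglyMeasurable k) :
    ∫ β, k β ∂toMeas (wlMap W (h + 1) x) = ∫ y in Icc (0 : ℝ) 1, W.W x y • k (wlMap W h y) :=
  integral_map_withDensity_ofReal (measurable_wlMap W h).aemeasurable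
    (W.measurable_row x).aemeasurable (ae_of_all _ fun y => (W.mem x y).1) hk.aestronglyMeasurable

end Features

theorem graphon_feature_eq_idm_feature_general (W : Graphon) (m : MPNNModel) (t : ℕ) (x : ℝ) :
    graphonFeat m W.W t x = idmFeat m t (wlMap W t x) := by
  induction t generalizing x with
  | zero => rfl
  | succ t ih =>
    calc graphonFeat m W.W (t + 1) x
        = m.φ t (∫ y in Icc (0 : ℝ) 1, W.W x y • idmFeat m t (wlMap W t y)) := by
          simp only [graphonFeat, ih]
      _ = m.φ t (∫ β, idmFeat m t β ∂toMeas (wlMap W (t + 1) x)) := by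
          rw [integral_toMeas_wlMap_succ W t x (continuous_idmFeat m t).stronglyMeasurable]

/-- For every `1 ≤ t ≤ L` and almost every `x ∈ [0,1]`, the graphon MPNN feature of
`x` equals the MPNN feature of the 1-WL color `i_{W,t}(x)`. -/
theorem graphon_feature_eq_idm_feature (W : Graphon) (m : MPNNModel) (L t : ℕ)
    (ht1 : 1 ≤ t) (htL : t ≤ L) :
    ∀ᵐ x ∂(volume.restrict (Set.Icc (0:ℝ) 1)),
      graphonFeat m W.W t x = idmFeat m t (wlMap W t x) :=
  ae_of_all _ (graphon_feature_eq_idm_feature_general W m t)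

end
end

section
/- For every 0 ≤ t ≤ ∞, the set N_t^1 of real-valued MPNN feature functions on M_t is closed under pointwise multiplication and under linear combinations, contains the constant-one function, and separates the points of M_t. -/
open MeasureTheory Set

noncomputable section

/-- The projections `p_{h+1,h} : M (h+1) → M h`, given by pushforward. -/
def projM : (h : ℕ) → M (h+1) → M h
  | 0, _ => ()
  | (h+1), α => ofSub ⟨(toMeas α).map (projM h), by
      by_cases hf : AEMeasurable (projM h) (toMeas α)
      · rw [Measure.map_apply_of_aemeasurable hf MeasurableSet.univ, Set.preimage_univ]
        exact (toSub α).2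
      · rw [Measure.map_of_not_aemeasurable hf]
        simp⟩

/-- The inverse limit `M_∞` of the spaces `M h` along the projections,
with the subspace topology of the product topology. -/
abbrev Minf : Type := {α : (h : ℕ) → M h // ∀ h, projM h (α (h+1)) = α h}

instance : MeasurableSpace Minf := borel Minf
instance : BorelSpace Minf := ⟨rfl⟩
/-- The set `{∫ h^{(t)}_β dα : α ∈ M (t+1)}` of attainable aggregated inputs of the
layer function `φ t`. -/
def aggSet (m : MPNNModel) (t : ℕ) : Set (EuclideanSpace ℝ (Fin (m.d t))) :=
  {z | ∃ α : M (t+1), z = ∫ β, idmFeat m t β ∂(toMeas α)}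

/-- An `L`-layer MPNN model: each of the used layer functions is Lipschitz on its
compact set of attainable aggregated inputs. -/
def LipModel (m : MPNNModel) (L : ℕ) : Prop :=
  ∀ t, t < L → ∃ K : NNReal, LipschitzOnWith K (m.φ t) (aggSet m t)

/-- The set `N_t^1` of real-valued MPNN feature functions on `M t`. -/
def NSet (t : ℕ) : Set (M t → ℝ) :=
  {f | ∃ m : MPNNModel, LipModel m t ∧ m.d t = 1 ∧
    f = fun α => ∑ i, idmFeat m t α i}

/-- The set `N_∞^1` of real-valued MPNN feature functions on `M = M_∞`. -/
def NSetInf : Set (Minf → ℝ) :=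
  {f | ∃ (t : ℕ) (m : MPNNModel), LipModel m t ∧ m.d t = 1 ∧
    f = fun α => ∑ i, idmFeat m t (α.1 t) i}

/-!
A function belongs to `N_{t+1}^1` exactly when it is `ψ (∫ h dα)` for a `t`-layer model `h` and a
continuous scalar function `ψ` that is Lipschitz on the attainable inputs. Running two models in
parallel, any locally Lipschitz `G` applied to two feature functions is therefore again a feature
function: `G` is absorbed into the last layer, and is Lipschitz there because the attainable inputs
form a compact set. Products and linear combinations are special cases.

Separation goes by induction on `t`: if `N_t^1` separates points, then by Stone–Weierstrass it is
dense in `C(M_t, ℝ)`, so two distinct measures on `M_t` integrate some `f ∈ N_t^1` differently, and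
`α ↦ ∫ f dα` is a feature function one level up. On `M_∞` any two feature functions live on a common
finite level, since an extra initial layer turns `f` on `M_t` into `f ∘ p_{t+1,t}` on `M_{t+1}`.
-/

local notation "ℝ^" n:max => EuclideanSpace ℝ (Fin n)

section FiniteMeasure

variable {X : Type*} [TopologicalSpace X] [CompactSpace X] [MeasurableSpace X] [BorelSpace X]

theorem integrable_of_continuous_of_compactSpace {E : Type*} [NormedAddCommGroup E] {f : X → E}
    (hf : Continuous f) (μ : Measure X) [IsFiniteMeasure μ] : Integrable f μ :=
  hf.integrable_of_hasCompactSupport (.of_compactSpace f)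

theorem continuous_integral_continuousMap (μ : Measure X) [IsFiniteMeasure μ] :
    Continuous fun f : C(X, ℝ) => ∫ x, f x ∂μ := by
  let toL1 : C(X, ℝ) →L[ℝ] Lp ℝ 1 μ := ContinuousMap.toLp 1 μ ℝ
  have integral_toL1 (f : C(X, ℝ)) : ∫ x, toL1 f x ∂μ = ∫ x, f x ∂μ :=
    integral_congr_ae (ContinuousMap.coeFn_toLp μ f)
  exact (continuous_integral.comp toL1.continuous).congr integral_toL1

theorem measure_ext_of_dense [HasOuterApproxClosed X] {μ ν : Measure X} [IsFiniteMeasure μ]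
    [IsFiniteMeasure ν] {S : Set C(X, ℝ)} (hS : Dense S)
    (h : ∀ f ∈ S, ∫ x, f x ∂μ = ∫ x, f x ∂ν) : μ = ν := by
  have integral_eq : (fun f : C(X, ℝ) => ∫ x, f x ∂μ) = fun f => ∫ x, f x ∂ν :=
    (continuous_integral_continuousMap μ).ext_on hS (continuous_integral_continuousMap ν) h
  exact ext_of_forall_integral_eq_of_IsFiniteMeasure fun f =>
    congrFun integral_eq f.toContinuousMap

end FiniteMeasure

theorem exists_lipschitzOnWith_comp_of_isCompact {X Y Z : Type*} [PseudoMetricSpace X]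
    [PseudoMetricSpace Y] [PseudoMetricSpace Z] {G : Y → Z} {F : X → Y} {S : Set X}
    (hG : LocallyLipschitz G) (hF : ∃ K, LipschitzOnWith K F S) (hS : IsCompact S) :
    ∃ K, LipschitzOnWith K (G ∘ F) S := by
  obtain ⟨K, hK⟩ := hF
  obtain ⟨L, hL⟩ := LocallyLipschitzOn.exists_lipschitzOnWith_of_compact
    (hS.image_of_continuousOn hK.continuousOn) hG.locallyLipschitzOn
  exact ⟨L * K, hL.comp hK (mapsTo_image F S)⟩

namespace SubProb

variable {X : Type} [MeasurableSpace X]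

instance (μ : SubProb X) : IsFiniteMeasure μ.1 := ⟨μ.2.trans_lt ENNReal.one_lt_top⟩

variable [TopologicalSpace X]

local instance : TopologicalSpace (SubProb X) := subProbWeakTop X

theorem continuous_integral_boundedContinuousFunction (f : BoundedContinuousFunction X ℝ) :
    Continuous fun μ : SubProb X => ∫ x, f x ∂μ.1 :=
  continuous_iInf_dom (i := f) continuous_induced_dom

theorem continuous_of_forall_continuous_integral {Y : Type*} [TopologicalSpace Y]
    {F : Y → SubProb X}
    (hF : ∀ f : BoundedContinuousFunction X ℝ, Continuous fun y => ∫ x, f x ∂(F y).1) :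
    Continuous F :=
  continuous_iInf_rng.2 fun f => continuous_induced_rng.2 (hF f)

variable [CompactSpace X] [BorelSpace X]

theorem continuous_integral {F : Type*} [NormedAddCommGroup F] [NormedSpace ℝ F]
    [FiniteDimensional ℝ F] {f : X → F} (hf : Continuous f) :
    Continuous fun μ : SubProb X => ∫ x, f x ∂μ.1 := by
  let coords : F ≃L[ℝ] (Fin (Module.finrank ℝ F) → ℝ) := (Module.finBasis ℝ F).equivFunL
  refine coords.comp_continuous_iff.1 (continuous_pi fun i => ?_)
  let coord : F →L[ℝ] ℝ := .proj i ∘L coords.toContinuousLinearMap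
  have coord_integral (μ : SubProb X) : ∫ x, coord (f x) ∂μ.1 = coord (∫ x, f x ∂μ.1) :=
    coord.integral_comp_comm (integrable_of_continuous_of_compactSpace hf μ.1)
  exact (continuous_integral_boundedContinuousFunction
    (.mkOfCompact ⟨coord ∘ f, coord.continuous.comp hf⟩)).congr coord_integral

instance compactSpace [T2Space X] : CompactSpace (SubProb X) := by
  have : CompactSpace {μ : FiniteMeasure X | μ.mass ≤ 1} :=
    isCompact_iff_compactSpace.1 (isCompact_setOfPred_finiteMeasure_le_of_compactSpace X 1)
  let F : {μ : FiniteMeasure X | μ.mass ≤ 1} → SubProb X := fun μ =>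
    ⟨μ.1, by simpa only [← FiniteMeasure.ennreal_mass] using ENNReal.coe_le_one_iff.2 μ.2⟩
  have continuous_F : Continuous F := continuous_of_forall_continuous_integral fun f =>
    (FiniteMeasure.continuous_integral_boundedContinuousFunction f).comp continuous_subtype_val
  have surjective_F : Function.Surjective F := fun μ =>
    ⟨⟨⟨μ.1, inferInstance⟩,
      ENNReal.coe_le_one_iff.1 (FiniteMeasure.ennreal_mass.trans_le μ.2)⟩, rfl⟩
  exact surjective_F.compactSpace continuous_F

instance metrizableSpace [TopologicalSpace.MetrizableSpace X] :
    TopologicalSpace.MetrizableSpace (SubProb X) := by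
  let := TopologicalSpace.metrizableSpaceMetric X
  let testFunction : ℕ → C(X, ℝ) := TopologicalSpace.denseSeq C(X, ℝ)
  refine Metric.PiNatEmbed.TopologicalSpace.MetrizableSpace.of_countable_separating
    (fun n (μ : SubProb X) => ∫ x, testFunction n x ∂μ.1)
    (fun n => continuous_integral_boundedContinuousFunction (.mkOfCompact (testFunction n)))
    fun μ ν hne => ?_
  contrapose! hne
  exact Subtype.ext (measure_ext_of_dense (TopologicalSpace.denseRange_denseSeq C(X, ℝ))
    (forall_mem_range.2 hne))

end SubProb

section IteratedDegreeMeasure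

instance : Subsingleton (M 0) := inferInstanceAs (Subsingleton Unit)

theorem compactSpace_and_metrizableSpace_M (h : ℕ) :
    CompactSpace (M h) ∧ TopologicalSpace.MetrizableSpace (M h) := by
  induction h with
  | zero =>
    exact ⟨inferInstanceAs (CompactSpace Unit),
      inferInstanceAs (TopologicalSpace.MetrizableSpace Unit)⟩
  | succ h ih =>
    obtain ⟨_, _⟩ := ih
    exact ⟨SubProb.compactSpace (X := M h), SubProb.metrizableSpace (X := M h)⟩

instance (h : ℕ) : CompactSpace (M h) := (compactSpace_and_metrizableSpace_M h).1

instance (h : ℕ) : TopologicalSpace.MetrizableSpace (M h) :=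
  (compactSpace_and_metrizableSpace_M h).2

instance {h : ℕ} (α : M (h + 1)) : IsFiniteMeasure (toMeas α) :=
  inferInstanceAs (IsFiniteMeasure (toSub α).1)

theorem continuous_integral_toMeas {h : ℕ} {F : Type*} [NormedAddCommGroup F] [NormedSpace ℝ F]
    [FiniteDimensional ℝ F] {f : M h → F} (hf : Continuous f) :
    Continuous fun α : M (h + 1) => ∫ β, f β ∂toMeas α :=
  SubProb.continuous_integral (X := M h) hf

theorem continuous_projM (h : ℕ) : Continuous (projM h) := by
  induction h with
  | zero => exact continuous_const
  | succ h ih =>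
    refine SubProb.continuous_of_forall_continuous_integral (X := M h) fun f => ?_
    have integral_projM (α : M (h + 2)) :
        ∫ β, f β ∂(toMeas α).map (projM h) = ∫ β, f (projM h β) ∂toMeas α :=
      integral_map ih.measurable.aemeasurable f.continuous.aestronglyMeasurable
    exact (continuous_integral_toMeas (f.continuous.comp ih)).congr fun α => (integral_projM α).symm

theorem integral_toMeas_projM {h : ℕ} {E : Type*} [NormedAddCommGroup E] [NormedSpace ℝ E]
    {f : M h → E} (hf : Continuous f) (α : M (h + 2)) :
    ∫ β, f β ∂toMeas (projM (h + 1) α) = ∫ β, f (projM h β) ∂toMeas α :=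
  integral_map (continuous_projM h).measurable.aemeasurable
    (integrable_of_continuous_of_compactSpace hf _).aestronglyMeasurable

end IteratedDegreeMeasure

/-- The linear map `ℝ^a → ℝ^b` that truncates or pads with zeros. It transports vectors between
coordinate spaces whose dimensions agree only propositionally. -/
def pad (a b : ℕ) : ℝ^a →L[ℝ] ℝ^b :=
  (Matrix.toLpLin 2 2 (.of fun i j => if i.1 = j.1 then 1 else 0)).toContinuousLinearMap

theorem pad_pad {a b : ℕ} (h : a = b) (x : ℝ^a) : pad b a (pad a b x) = x := by
  subst h
  have pad_matrix_eq_one :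
      (.of fun i j => if i.1 = j.1 then 1 else 0 : Matrix (Fin a) (Fin a) ℝ) = 1 := by
    ext i j
    simp [Matrix.one_apply, Fin.ext_iff]
  simp [pad, pad_matrix_eq_one]

/-- The functional `x ↦ ∑ i, x i`, through which `NSet` reads off the feature of a model with
one-dimensional output. -/
def coordSum (n : ℕ) : ℝ^n →L[ℝ] ℝ := ∑ i, EuclideanSpace.proj i

theorem coordSum_apply {n : ℕ} (x : ℝ^n) : coordSum n x = ∑ i, x i := by
  simp [coordSum]

theorem lipModel_succ_iff {m : MPNNModel} {t : ℕ} :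
    LipModel m (t + 1) ↔ LipModel m t ∧ ∃ K, LipschitzOnWith K (m.φ t) (aggSet m t) :=
  Nat.forall_lt_succ_right

namespace MPNNModel

variable {m m' : MPNNModel} {s t : ℕ}

/-- The aggregated input `∫ h^{(t)} dα` that the layer function `φ t` receives at `α`. -/
def agg (m : MPNNModel) (t : ℕ) (α : M (t + 1)) : ℝ^(m.d t) := ∫ β, idmFeat m t β ∂toMeas α

theorem idmFeat_succ (α : M (t + 1)) : idmFeat m (t + 1) α = m.φ t (m.agg t α) := rfl

theorem continuous_idmFeat (m : MPNNModel) (t : ℕ) : Continuous (idmFeat m t) := by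
  induction t with
  | zero => exact continuous_const
  | succ t ih => exact (m.cont t).comp (continuous_integral_toMeas ih)

theorem integrable_idmFeat (α : M (t + 1)) : Integrable (idmFeat m t) (toMeas α) :=
  integrable_of_continuous_of_compactSpace (m.continuous_idmFeat t) _

theorem map_agg_of_map_idmFeat {T : ℝ^(m.d s) →L[ℝ] ℝ^(m'.d s)}
    (hT : ∀ β, T (idmFeat m s β) = idmFeat m' s β) (α : M (s + 1)) :
    T (m.agg s α) = m'.agg s α := by
  simp only [agg, ← hT]
  exact (T.integral_comp_comm (integrable_idmFeat α)).symm

theorem isCompact_aggSet (m : MPNNModel) (t : ℕ) : IsCompact (aggSet m t) := by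
  have aggSet_eq_range : aggSet m t = range (m.agg t) := by
    ext z
    exact exists_congr fun α => eq_comm
  rw [aggSet_eq_range]
  exact isCompact_range (continuous_integral_toMeas (m.continuous_idmFeat t))

/-- The linear maps `π s` carry the initial feature and the first `t` layers of `m` to those of
`m'`. Being linear, they commute with aggregation and hence carry features to features. -/
structure Intertwines (m m' : MPNNModel) (t : ℕ) (π : ∀ s, ℝ^(m.d s) →L[ℝ] ℝ^(m'.d s)) :
    Prop where
  map_init : π 0 m.φ₀ = m'.φ₀
  map_layer : ∀ s < t, ∀ x, π (s + 1) (m.φ s x) = m'.φ s (π s x)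

namespace Intertwines

variable {π : ∀ s, ℝ^(m.d s) →L[ℝ] ℝ^(m'.d s)}

theorem map_idmFeat (hπ : Intertwines m m' t π) (hs : s ≤ t) (α : M s) :
    π s (idmFeat m s α) = idmFeat m' s α := by
  induction s with
  | zero => exact hπ.map_init
  | succ s ih =>
    rw [idmFeat_succ, hπ.map_layer s hs, map_agg_of_map_idmFeat (ih (by lia)), idmFeat_succ]

theorem map_agg (hπ : Intertwines m m' t π) (hs : s ≤ t) (α : M (s + 1)) :
    π s (m.agg s α) = m'.agg s α :=
  map_agg_of_map_idmFeat (hπ.map_idmFeat hs) α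

theorem mapsTo_aggSet (hπ : Intertwines m m' t π) (hs : s ≤ t) :
    MapsTo (π s) (aggSet m s) (aggSet m' s) := by
  rintro _ ⟨α, rfl⟩
  exact ⟨α, hπ.map_agg hs α⟩

theorem exists_lipschitzOnWith_comp {Y : Type*} [PseudoEMetricSpace Y] {f : ℝ^(m'.d s) → Y}
    (hπ : Intertwines m m' t π) (hs : s ≤ t) (hf : ∃ K, LipschitzOnWith K f (aggSet m' s)) :
    ∃ K, LipschitzOnWith K (f ∘ π s) (aggSet m s) := by
  obtain ⟨K, hK⟩ := hf
  exact ⟨_, hK.comp (π s).lipschitz.lipschitzOnWith (hπ.mapsTo_aggSet hs)⟩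

end Intertwines

/-- The model that computes as `m` before layer `t` and applies the scalar function `ψ` as its layer
`t`. Its values beyond level `t + 1` are irrelevant. -/
def readout (m : MPNNModel) (t : ℕ) (ψ : C(ℝ^(m.d t), ℝ)) : MPNNModel where
  d := Function.update m.d (t + 1) 1
  φ₀ := pad _ _ m.φ₀
  φ := Function.update (fun s x => pad _ _ (m.φ s (pad _ _ x))) t
    fun x => WithLp.toLp 2 fun _ => ψ (pad _ _ x)
  cont := (Function.forall_update_iff (β := fun s => ℝ^(Function.update m.d (t + 1) 1 s) →
    ℝ^(Function.update m.d (t + 1) 1 (s + 1))) _ fun _ => Continuous).2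
      ⟨by fun_prop, fun s _ => by have := m.cont s; fun_prop⟩

section Readout

variable {ψ : C(ℝ^(m.d t), ℝ)}

theorem readout_d_of_le (hs : s ≤ t) : (m.readout t ψ).d s = m.d s :=
  Function.update_of_ne (by lia) _ _

theorem readout_d_succ : (m.readout t ψ).d (t + 1) = 1 :=
  Function.update_self _ _ _

theorem readout_φ_of_lt (hs : s < t) :
    (m.readout t ψ).φ s = fun x => pad _ _ (m.φ s (pad _ _ x)) := by
  simp only [readout, Function.update_of_ne hs.ne]
  rfl

theorem readout_φ_self :
    (m.readout t ψ).φ t = fun x => WithLp.toLp 2 fun _ => ψ (pad _ _ x) := by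
  simp only [readout, Function.update_self]
  rfl

theorem intertwines_pad_readout (m : MPNNModel) (t : ℕ) (ψ : C(ℝ^(m.d t), ℝ)) :
    Intertwines (m.readout t ψ) m t fun _ => pad _ _ where
  map_init := pad_pad (readout_d_of_le (Nat.zero_le t)).symm _
  map_layer s hs x := by
    rw [readout_φ_of_lt hs]
    exact pad_pad (readout_d_of_le hs).symm _

theorem sum_idmFeat_readout (m : MPNNModel) (t : ℕ) (ψ : C(ℝ^(m.d t), ℝ)) (α : M (t + 1)) :
    ∑ i, idmFeat (m.readout t ψ) (t + 1) α i = ψ (m.agg t α) := by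
  rw [idmFeat_succ, readout_φ_self]
  simp only [(intertwines_pad_readout m t ψ).map_agg le_rfl, Finset.sum_const, Finset.card_univ,
    Fintype.card_fin, readout_d_succ, one_smul]

theorem lipModel_readout (hm : LipModel m t) (hψ : ∃ K, LipschitzOnWith K ψ (aggSet m t)) :
    LipModel (m.readout t ψ) (t + 1) := by
  have hpad := intertwines_pad_readout m t ψ
  refine lipModel_succ_iff.2 ⟨fun s hs => ?_, ?_⟩
  · rw [readout_φ_of_lt hs]
    obtain ⟨K, hK⟩ := hpad.exists_lipschitzOnWith_comp hs.le (hm s hs)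
    exact ⟨_, (pad _ _).lipschitz.comp_lipschitzOnWith hK⟩
  · rw [readout_φ_self]
    obtain ⟨K, hK⟩ := hpad.exists_lipschitzOnWith_comp le_rfl hψ
    have lipschitz_const : LipschitzWith 1 fun (c : ℝ) (_ : Fin ((m.readout t ψ).d (t + 1))) => c :=
      LipschitzWith.of_dist_le_mul fun a b => by simpa using dist_pi_const_le a b
    exact ⟨_, ((PiLp.lipschitzWith_toLp 2 _).comp lipschitz_const).comp_lipschitzOnWith hK⟩

end Readout

/-- The model that runs `m` and `m'` in parallel on two blocks of coordinates. -/
def parallel (m m' : MPNNModel) : MPNNModel where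
  d s := m.d s + m'.d s
  φ₀ := EuclideanSpace.finAddEquivProd.symm (m.φ₀, m'.φ₀)
  φ s := EuclideanSpace.finAddEquivProd.symm ∘ Prod.map (m.φ s) (m'.φ s) ∘
    EuclideanSpace.finAddEquivProd
  cont s := (ContinuousLinearEquiv.continuous _).comp
    (((m.cont s).prodMap (m'.cont s)).comp (ContinuousLinearEquiv.continuous _))

/-- The projection of the coordinates of `m.parallel m'` at level `s` to those of `m`. -/
def parallelFst (m m' : MPNNModel) (s : ℕ) : ℝ^((m.parallel m').d s) →L[ℝ] ℝ^(m.d s) :=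
  .fst ℝ _ _ ∘L (EuclideanSpace.finAddEquivProd (𝕜 := ℝ)).toContinuousLinearMap

/-- The projection of the coordinates of `m.parallel m'` at level `s` to those of `m'`. -/
def parallelSnd (m m' : MPNNModel) (s : ℕ) : ℝ^((m.parallel m').d s) →L[ℝ] ℝ^(m'.d s) :=
  .snd ℝ _ _ ∘L (EuclideanSpace.finAddEquivProd (𝕜 := ℝ)).toContinuousLinearMap

theorem intertwines_parallelFst (m m' : MPNNModel) (t : ℕ) :
    Intertwines (m.parallel m') m t (parallelFst m m') where
  map_init := congrArg Prod.fst (EuclideanSpace.finAddEquivProd.apply_symm_apply _)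
  map_layer _ _ _ := congrArg Prod.fst (EuclideanSpace.finAddEquivProd.apply_symm_apply _)

theorem intertwines_parallelSnd (m m' : MPNNModel) (t : ℕ) :
    Intertwines (m.parallel m') m' t (parallelSnd m m') where
  map_init := congrArg Prod.snd (EuclideanSpace.finAddEquivProd.apply_symm_apply _)
  map_layer _ _ _ := congrArg Prod.snd (EuclideanSpace.finAddEquivProd.apply_symm_apply _)

theorem exists_lipschitzOnWith_prodMk_parallel {Y Z : Type*} [PseudoEMetricSpace Y]
    [PseudoEMetricSpace Z] {f : ℝ^(m.d s) → Y} {g : ℝ^(m'.d s) → Z}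
    (hf : ∃ K, LipschitzOnWith K f (aggSet m s)) (hg : ∃ K, LipschitzOnWith K g (aggSet m' s)) :
    ∃ K, LipschitzOnWith K (fun x => (f (parallelFst m m' s x), g (parallelSnd m m' s x)))
      (aggSet (m.parallel m') s) := by
  obtain ⟨K, hK⟩ := (intertwines_parallelFst m m' s).exists_lipschitzOnWith_comp le_rfl hf
  obtain ⟨L, hL⟩ := (intertwines_parallelSnd m m' s).exists_lipschitzOnWith_comp le_rfl hg
  exact ⟨_, hK.prodMk hL⟩

theorem lipModel_parallel (hm : LipModel m t) (hm' : LipModel m' t) :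
    LipModel (m.parallel m') t := by
  intro s hs
  obtain ⟨K, hK⟩ := exists_lipschitzOnWith_prodMk_parallel (hm s hs) (hm' s hs)
  exact ⟨_, (ContinuousLinearEquiv.lipschitz _).comp_lipschitzOnWith hK⟩

/-- The model all of whose features are the constant `c`. -/
def const (c : ℝ) : MPNNModel where
  d _ := 1
  φ₀ := WithLp.toLp 2 fun _ => c
  φ _ _ := WithLp.toLp 2 fun _ => c
  cont _ := continuous_const

theorem idmFeat_const (c : ℝ) (t : ℕ) (α : M t) :
    idmFeat (const c) t α = WithLp.toLp 2 fun _ => c := by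
  cases t <;> rfl

/-- The model that computes the initial feature of `m` in an additional first layer, starting from
the zero-dimensional space, so that every later layer of `m` acts one level higher. -/
def delay (m : MPNNModel) : MPNNModel where
  d
    | 0 => 0
    | s + 1 => m.d s
  φ₀ := 0
  φ
    | 0 => fun _ => m.φ₀
    | s + 1 => m.φ s
  cont
    | 0 => continuous_const
    | s + 1 => m.cont s

theorem idmFeat_delay (m : MPNNModel) (t : ℕ) (α : M (t + 1)) :
    idmFeat m.delay (t + 1) α = idmFeat m t (projM t α) := by
  induction t with
  | zero => rfl
  | succ t ih =>
    exact congrArg (m.φ t) ((integral_congr_ae (.of_forall ih)).trans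
      (integral_toMeas_projM (m.continuous_idmFeat t) α).symm)

theorem agg_delay (m : MPNNModel) (t : ℕ) (α : M (t + 2)) :
    m.delay.agg (t + 1) α = m.agg t (projM (t + 1) α) :=
  (integral_congr_ae (.of_forall (m.idmFeat_delay t))).trans
    (integral_toMeas_projM (m.continuous_idmFeat t) α).symm

theorem lipModel_delay (hm : LipModel m t) : LipModel m.delay (t + 1) := by
  rintro (_ | s) hs
  · exact ⟨0, (LipschitzWith.const _).lipschitzOnWith⟩
  · obtain ⟨K, hK⟩ := hm s (Nat.lt_of_succ_lt_succ hs)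
    refine ⟨K, hK.mono ?_⟩
    rintro _ ⟨α, rfl⟩
    exact ⟨projM (s + 1) α, m.agg_delay s α⟩

end MPNNModel

section FeatureFunctions

variable {t : ℕ}

theorem continuous_of_mem_NSet {f : M t → ℝ} (hf : f ∈ NSet t) : Continuous f := by
  obtain ⟨m, -, -, rfl⟩ := hf
  have := m.continuous_idmFeat t
  fun_prop

theorem const_mem_NSet (t : ℕ) (c : ℝ) : (fun _ => c) ∈ NSet t := by
  refine ⟨.const c, fun _ _ => ⟨0, (LipschitzWith.const _).lipschitzOnWith⟩, rfl, ?_⟩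
  funext α
  rw [MPNNModel.idmFeat_const]
  exact (Fin.sum_univ_one fun _ => c).symm

theorem mem_NSet_succ_iff {f : M (t + 1) → ℝ} :
    f ∈ NSet (t + 1) ↔ ∃ m, LipModel m t ∧ ∃ ψ : C(ℝ^(m.d t), ℝ),
      (∃ K, LipschitzOnWith K ψ (aggSet m t)) ∧ f = fun α => ψ (m.agg t α) := by
  constructor
  · rintro ⟨m, hm, -, rfl⟩
    obtain ⟨hm, K, hK⟩ := lipModel_succ_iff.1 hm
    refine ⟨m, hm, ⟨fun x => coordSum _ (m.φ t x), (coordSum _).continuous.comp (m.cont t)⟩,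
      ⟨_, (coordSum _).lipschitz.comp_lipschitzOnWith hK⟩, ?_⟩
    exact funext fun α => (coordSum_apply _).symm
  · rintro ⟨m, hm, ψ, hψ, rfl⟩
    exact ⟨m.readout t ψ, MPNNModel.lipModel_readout hm hψ, MPNNModel.readout_d_succ,
      funext fun α => (m.sum_idmFeat_readout t ψ α).symm⟩

theorem comp_mem_NSet {G : ℝ × ℝ → ℝ} (hG : LocallyLipschitz G) {f g : M t → ℝ}
    (hf : f ∈ NSet t) (hg : g ∈ NSet t) : (fun α => G (f α, g α)) ∈ NSet t := by
  cases t with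
  | zero =>
    have eq_const (α : M 0) : G (f α, g α) = G (f (), g ()) := by
      rw [Subsingleton.elim α (() : M 0)]
    simpa only [eq_const] using const_mem_NSet 0 _
  | succ t =>
    obtain ⟨m, hm, ψ, hψ, rfl⟩ := mem_NSet_succ_iff.1 hf
    obtain ⟨m', hm', ψ', hψ', rfl⟩ := mem_NSet_succ_iff.1 hg
    let pairing : C(ℝ^((m.parallel m').d t), ℝ × ℝ) :=
      (ψ.comp (m.parallelFst m' t)).prodMk (ψ'.comp (m.parallelSnd m' t))
    refine mem_NSet_succ_iff.2 ⟨m.parallel m', MPNNModel.lipModel_parallel hm hm',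
      .comp ⟨G, hG.continuous⟩ pairing, ?_, ?_⟩
    · exact exists_lipschitzOnWith_comp_of_isCompact (F := pairing) hG
        (MPNNModel.exists_lipschitzOnWith_prodMk_parallel hψ hψ')
        ((m.parallel m').isCompact_aggSet t)
    · funext α
      simp [pairing, (m.intertwines_parallelFst m' t).map_agg le_rfl,
        (m.intertwines_parallelSnd m' t).map_agg le_rfl]

theorem locallyLipschitz_mul : LocallyLipschitz fun p : ℝ × ℝ => p.1 * p.2 :=
  ContDiff.locallyLipschitz (𝕂 := ℝ) (by fun_prop)

theorem locallyLipschitz_linearCombination (a b : ℝ) :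
    LocallyLipschitz fun p : ℝ × ℝ => a * p.1 + b * p.2 :=
  ContDiff.locallyLipschitz (𝕂 := ℝ) (by fun_prop)

/-- The feature functions on `M t` as a subalgebra of `C(M t, ℝ)`, the form in which the
Stone–Weierstrass theorem applies to them. -/
def featureSubalgebra (t : ℕ) : Subalgebra ℝ C(M t, ℝ) where
  carrier := {f | ⇑f ∈ NSet t}
  mul_mem' hf hg := comp_mem_NSet locallyLipschitz_mul hf hg
  add_mem' {f g} hf hg := by
    have hfg : (fun α => 1 * f α + 1 * g α) ∈ NSet t :=
      comp_mem_NSet (locallyLipschitz_linearCombination 1 1) hf hg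
    simp only [one_mul] at hfg
    exact hfg
  algebraMap_mem' c := const_mem_NSet t c

theorem integral_mem_NSet_succ {f : M t → ℝ} (hf : f ∈ NSet t) :
    (fun α => ∫ β, f β ∂toMeas α) ∈ NSet (t + 1) := by
  obtain ⟨m, hm, -, rfl⟩ := hf
  refine mem_NSet_succ_iff.2
    ⟨m, hm, ⟨coordSum _, (coordSum _).continuous⟩,
      ⟨_, (coordSum _).lipschitz.lipschitzOnWith⟩, funext fun α => ?_⟩
  simp only [← coordSum_apply]
  exact (coordSum _).integral_comp_comm (MPNNModel.integrable_idmFeat α)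

theorem eq_of_forall_integral_mem_NSet_eq
    (hsep : ∀ α β : M t, α ≠ β → ∃ f ∈ NSet t, f α ≠ f β) {α β : M (t + 1)}
    (h : ∀ f ∈ NSet t, ∫ γ, f γ ∂toMeas α = ∫ γ, f γ ∂toMeas β) : α = β := by
  have separatesPoints : (featureSubalgebra t).SeparatesPoints := by
    intro γ δ hne
    obtain ⟨f, hf, hfne⟩ := hsep γ δ hne
    exact ⟨f, ⟨⟨f, continuous_of_mem_NSet hf⟩, hf, rfl⟩, hfne⟩
  have dense : Dense (featureSubalgebra t : Set C(M t, ℝ)) :=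
    ContinuousMap.continuousMap_mem_subalgebra_closure_of_separatesPoints _ separatesPoints
  have toMeas_eq : toMeas α = toMeas β := measure_ext_of_dense dense fun f hf => h f hf
  exact Subtype.ext toMeas_eq

theorem exists_mem_NSet_apply_ne (t : ℕ) :
    ∀ α β : M t, α ≠ β → ∃ f ∈ NSet t, f α ≠ f β := by
  induction t with
  | zero => exact fun α β hne => (hne (Subsingleton.elim α β)).elim
  | succ t ih =>
    intro α β hne
    contrapose! hne
    exact eq_of_forall_integral_mem_NSet_eq ih fun f hf => hne _ (integral_mem_NSet_succ hf)

theorem comp_projM_mem_NSet {f : M t → ℝ} (hf : f ∈ NSet t) : f ∘ projM t ∈ NSet (t + 1) := by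
  obtain ⟨m, hm, hd, rfl⟩ := hf
  refine ⟨m.delay, MPNNModel.lipModel_delay hm, hd, funext fun α => ?_⟩
  rw [MPNNModel.idmFeat_delay]
  rfl

theorem exists_mem_NSet_of_le {s : ℕ} (hst : s ≤ t) {f : M s → ℝ} (hf : f ∈ NSet s) :
    ∃ g ∈ NSet t, ∀ α : Minf, g (α.1 t) = f (α.1 s) := by
  induction t, hst using Nat.le_induction with
  | base => exact ⟨f, hf, fun _ => rfl⟩
  | succ t _ ih =>
    obtain ⟨g, hg, hgf⟩ := ih
    refine ⟨_, comp_projM_mem_NSet hg, fun α => ?_⟩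
    rw [Function.comp_apply, α.2 t, hgf α]

theorem mem_NSetInf_iff {f : Minf → ℝ} :
    f ∈ NSetInf ↔ ∃ t, ∃ g ∈ NSet t, f = fun α => g (α.1 t) := by
  constructor
  · rintro ⟨t, m, hm, hd, rfl⟩
    exact ⟨t, _, ⟨m, hm, hd, rfl⟩, rfl⟩
  · rintro ⟨t, _, ⟨m, hm, hd, rfl⟩, rfl⟩
    exact ⟨t, m, hm, hd, rfl⟩

theorem comp_mem_NSetInf {G : ℝ × ℝ → ℝ} (hG : LocallyLipschitz G) {f g : Minf → ℝ}
    (hf : f ∈ NSetInf) (hg : g ∈ NSetInf) : (fun α => G (f α, g α)) ∈ NSetInf := by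
  obtain ⟨s, f₀, hf₀, rfl⟩ := mem_NSetInf_iff.1 hf
  obtain ⟨t, g₀, hg₀, rfl⟩ := mem_NSetInf_iff.1 hg
  obtain ⟨f₁, hf₁, hf₁₀⟩ := exists_mem_NSet_of_le (le_max_left s t) hf₀
  obtain ⟨g₁, hg₁, hg₁₀⟩ := exists_mem_NSet_of_le (le_max_right s t) hg₀
  refine mem_NSetInf_iff.2 ⟨max s t, _, comp_mem_NSet hG hf₁ hg₁, funext fun α => ?_⟩
  rw [hf₁₀, hg₁₀]

theorem const_mem_NSetInf (c : ℝ) : (fun _ => c) ∈ NSetInf :=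
  mem_NSetInf_iff.2 ⟨0, _, const_mem_NSet 0 c, rfl⟩

theorem exists_mem_NSetInf_apply_ne {α β : Minf} (hne : α ≠ β) : ∃ f ∈ NSetInf, f α ≠ f β := by
  obtain ⟨t, ht⟩ := Function.ne_iff.1 (Subtype.coe_ne_coe.2 hne)
  obtain ⟨f, hf, hfne⟩ := exists_mem_NSet_apply_ne t _ _ ht
  exact ⟨_, mem_NSetInf_iff.2 ⟨t, f, hf, rfl⟩, hfne⟩

end FeatureFunctions

/-- For every `0 ≤ t ≤ ∞`, the set `N_t^1` of real-valued MPNN feature functions is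
closed under pointwise multiplication and linear combinations, contains the constant
one function, and separates the points of `M t`. -/
theorem mpnn_features_subalgebra :
    (∀ t : ℕ,
      (∀ f ∈ NSet t, ∀ g ∈ NSet t, (fun α => f α * g α) ∈ NSet t) ∧
      (∀ f ∈ NSet t, ∀ g ∈ NSet t, ∀ a b : ℝ,
        (fun α => a * f α + b * g α) ∈ NSet t) ∧
      ((fun _ => (1 : ℝ)) ∈ NSet t) ∧
      (∀ α β : M t, α ≠ β → ∃ f ∈ NSet t, f α ≠ f β)) ∧
    ((∀ f ∈ NSetInf, ∀ g ∈ NSetInf, (fun α => f α * g α) ∈ NSetInf) ∧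
      (∀ f ∈ NSetInf, ∀ g ∈ NSetInf, ∀ a b : ℝ,
        (fun α => a * f α + b * g α) ∈ NSetInf) ∧
      ((fun _ => (1 : ℝ)) ∈ NSetInf) ∧
      (∀ α β : Minf, α ≠ β → ∃ f ∈ NSetInf, f α ≠ f β)) := by
  refine ⟨fun t => ⟨?_, ?_, const_mem_NSet t 1, exists_mem_NSet_apply_ne t⟩,
    ?_, ?_, const_mem_NSetInf 1, fun α β => exists_mem_NSetInf_apply_ne⟩
  · exact fun f hf g hg => comp_mem_NSet locallyLipschitz_mul hf hg
  · exact fun f hf g hg a b => comp_mem_NSet (locallyLipschitz_linearCombination a b) hf hg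
  · exact fun f hf g hg => comp_mem_NSetInf locallyLipschitz_mul hf hg
  · exact fun f hf g hg a b => comp_mem_NSetInf (locallyLipschitz_linearCombination a b) hf hg

end
end
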